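/- For β ∈ (0,1), positive integers n and k with k ≤ n and n - kβ > 0, and t > 0 with f_β(t) > 0, define G^{(n,k)}_β(t) = (β^k t^{-n} / (Γ(n - kβ) f_β(t))) ∫_0^t f_β(v)(t-v)^{n-kβ-1} dv. Then ∑_{k=1}^{n} G^{(n,k)}_β(t) · β^{1-k} Γ(n)/Γ(k) · (β^{k-1}Γ(k)/Γ(n)) S_β(n,k) = 1; equivalently, ∑_{k=1}^{n} β^k t^{-n} S_β(n,k) ∫_0^t f_β(v)(t-v)^{n-kβ-1}/Γ(n-kβ) dv = f_β(t) for almost every t > 0, where S_β(n,k) is the generalized Stirling number. -/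

import Mathlib

open MeasureTheory Finset

/-- Rising factorial (Pochhammer symbol). -/
noncomputable def risingFactorial (x : ℝ) (n : ℕ) : ℝ :=
  ∏ i ∈ Finset.range n, (x + i)

/-- Generalized Stirling number of the second kind. -/
noncomputable def genStirling (σ : ℝ) (n k : ℕ) : ℝ :=
  (1 / (σ ^ k * (Nat.factorial k : ℝ))) *
    ∑ j ∈ Finset.Icc 1 k, (-1 : ℝ) ^ j * (Nat.choose k j : ℝ) *
      risingFactorial (-(j * σ)) n

/-- A density of a positive `σ`-stable random variable. -/
def IsStableDensity (σ : ℝ) (f : ℝ → ℝ) : Prop :=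
  (∀ t, 0 ≤ f t) ∧ (∀ t ≤ (0 : ℝ), f t = 0) ∧
    ∀ l : ℝ, 0 ≤ l →
      ∫ t in Set.Ioi (0 : ℝ), Real.exp (-l * t) * f t = Real.exp (-(l ^ σ))


noncomputable def gA (β : ℝ) (n k : ℕ) : ℝ :=
  (1 / (Nat.factorial k : ℝ)) *
    ∑ j ∈ Finset.range (k + 1), (-1 : ℝ) ^ j * (Nat.choose k j : ℝ) *
      risingFactorial (-(j * β)) n

lemma rf_zero_succ (n : ℕ) : risingFactorial 0 (n + 1) = 0 := by
  unfold risingFactorial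
  exact Finset.prod_eq_zero (i := 0) (by simp) (by simp)

lemma gA_eq (β : ℝ) (hβ : β ≠ 0) (n k : ℕ) (hn : 1 ≤ n) :
    gA β n k = β ^ k * genStirling β n k := by
  unfold gA genStirling
  obtain ⟨m, rfl⟩ : ∃ m, n = m + 1 := ⟨n - 1, by omega⟩
  have h : Finset.range (k + 1) = insert 0 (Finset.Icc 1 k) := by
    ext x; simp; omega
  rw [h, Finset.sum_insert (by simp)]
  have h0 : risingFactorial (-(((0 : ℕ) : ℝ) * β)) (m + 1) = 0 := by
    simpa using rf_zero_succ m
  rw [h0, mul_zero, zero_add]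
  have : β ^ k ≠ 0 := pow_ne_zero _ hβ
  generalize (∑ j ∈ Finset.Icc 1 k, (-1 : ℝ) ^ j * (Nat.choose k j : ℝ) *
      risingFactorial (-(j * β)) (m + 1)) = S
  field_simp

lemma gA_zero_zero (β : ℝ) : gA β 0 0 = 1 := by
  simp [gA, risingFactorial]

lemma gA_zero_succ (β : ℝ) (k : ℕ) : gA β 0 (k + 1) = 0 := by
  have h := Int.alternating_sum_range_choose_of_ne (n := k + 1) (by omega)
  have h2 : ∑ j ∈ Finset.range (k + 1 + 1), (-1 : ℝ) ^ j * (Nat.choose (k + 1) j : ℝ) = 0 := by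
    exact_mod_cast h
  simp only [gA, risingFactorial, Finset.range_zero, Finset.prod_empty, mul_one, h2, mul_zero]

lemma gA_succ_zero (β : ℝ) (n : ℕ) : gA β (n + 1) 0 = n * gA β n 0 := by
  simp [gA, risingFactorial, Finset.prod_range_succ]
  ring

lemma gA_succ_succ (β : ℝ) (n k : ℕ) :
    gA β (n + 1) (k + 1) = β * gA β n k + (n - (k + 1) * β) * gA β n (k + 1) := by
  have hrf : ∀ x : ℝ, risingFactorial x (n + 1) = risingFactorial x n * (x + n) := by
    intro x; simp [risingFactorial, Finset.prod_range_succ]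
  have key : ∑ j ∈ Finset.range (k + 1 + 1), (-1 : ℝ) ^ j * (Nat.choose (k + 1) j : ℝ) *
      risingFactorial (-(j * β)) (n + 1)
      = (n - (k + 1) * β) * ∑ j ∈ Finset.range (k + 1 + 1),
          (-1 : ℝ) ^ j * (Nat.choose (k + 1) j : ℝ) * risingFactorial (-(j * β)) n
        + (k + 1) * β * ∑ j ∈ Finset.range (k + 1),
          (-1 : ℝ) ^ j * (Nat.choose k j : ℝ) * risingFactorial (-(j * β)) n := by
    have e : ∑ j ∈ Finset.range (k + 1),
          (-1 : ℝ) ^ j * (Nat.choose k j : ℝ) * risingFactorial (-(j * β)) n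
        = ∑ j ∈ Finset.range (k + 1 + 1),
          (-1 : ℝ) ^ j * (Nat.choose k j : ℝ) * risingFactorial (-(j * β)) n := by
      rw [Finset.sum_range_succ _ (k + 1)]; simp
    rw [e, Finset.mul_sum, Finset.mul_sum, ← Finset.sum_add_distrib]
    refine Finset.sum_congr rfl fun j hj => ?_
    have hj' : j ≤ k + 1 := by simp at hj; omega
    have hc : ((k : ℝ) + 1) * (Nat.choose k j : ℝ) = ((k : ℝ) + 1 - j) * (Nat.choose (k + 1) j) := by
      have := Nat.choose_mul_succ_eq k j
      have h2 : ((k.choose j * (k + 1) : ℕ) : ℝ) = (((k + 1).choose j * (k + 1 - j) : ℕ) : ℝ) := by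
        rw [this]
      push_cast [Nat.cast_sub hj'] at h2
      linarith
    rw [hrf]
    have : ((k : ℝ) + 1) * β * ((-1 : ℝ) ^ j * (Nat.choose k j : ℝ) * risingFactorial (-(j * β)) n)
      = β * ((-1 : ℝ) ^ j * (((k : ℝ) + 1) * (Nat.choose k j : ℝ)) * risingFactorial (-(j * β)) n) := by
      ring
    rw [this, hc]; ring
  unfold gA
  rw [key]
  have hk : (Nat.factorial k : ℝ) ≠ 0 := by exact_mod_cast Nat.factorial_ne_zero k
  have hk1 : ((k : ℝ) + 1) ≠ 0 := by positivity
  rw [Nat.factorial_succ]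
  push_cast
  field_simp
  ring

lemma gA_of_lt (β : ℝ) (n : ℕ) : ∀ k, n < k → gA β n k = 0 := by
  induction n with
  | zero =>
    intro k hk
    obtain ⟨m, rfl⟩ : ∃ m, k = m + 1 := ⟨k - 1, by omega⟩
    exact gA_zero_succ β m
  | succ n ih =>
    intro k hk
    obtain ⟨m, rfl⟩ : ∃ m, k = m + 1 := ⟨k - 1, by omega⟩
    rw [gA_succ_succ, ih m (by omega), ih (m + 1) (by omega)]; simp

lemma gA_nonneg (β : ℝ) (h0 : 0 < β) (h1 : β < 1) (n : ℕ) : ∀ k, 0 ≤ gA β n k := by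
  induction n with
  | zero =>
    intro k
    cases k with
    | zero => rw [gA_zero_zero]; norm_num
    | succ m => rw [gA_zero_succ]
  | succ n ih =>
    intro k
    cases k with
    | zero => rw [gA_succ_zero]; exact mul_nonneg (by positivity) (ih 0)
    | succ m =>
      rw [gA_succ_succ]
      refine add_nonneg (mul_nonneg h0.le (ih m)) ?_
      by_cases hm : m + 1 ≤ n
      · refine mul_nonneg ?_ (ih _)
        have : ((m : ℝ) + 1) ≤ n := by exact_mod_cast hm
        nlinarith
      · rw [gA_of_lt β n (m + 1) (by omega)]; simp

lemma gA_sum_step (β : ℝ) (n : ℕ) (x : ℕ → ℝ) :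
    ∑ k ∈ Finset.range (n + 1), gA β n k * (β * x (k + 1) + (n - k * β) * x k)
      = ∑ k ∈ Finset.range (n + 1 + 1), gA β (n + 1) k * x k := by
  have e : ∑ k ∈ Finset.range (n + 1), gA β n k * ((n - k * β) * x k)
      = ∑ k ∈ Finset.range (n + 1 + 1), gA β n k * ((n - k * β) * x k) := by
    rw [Finset.sum_range_succ _ (n + 1), gA_of_lt β n (n + 1) (by omega)]; simp
  simp only [mul_add, Finset.sum_add_distrib]
  rw [e, Finset.sum_range_succ' _ (n + 1), Finset.sum_range_succ' _ (n + 1), ← add_assoc,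
    ← Finset.sum_add_distrib, gA_succ_zero]
  congr 1
  · refine Finset.sum_congr rfl fun k _ => ?_
    rw [gA_succ_succ]; push_cast; ring
  · push_cast; ring

open ProbabilityTheory in
lemma uniq_aux (μ ν : Measure ℝ)
    (hμ : ∀ s : ℝ, s < 1 → Integrable (fun x => Real.exp (s * x)) μ)
    (hν : ∀ s : ℝ, s < 1 → Integrable (fun x => Real.exp (s * x)) ν)
    (h : ∀ s : ℝ, s < 1 → ∫ x, Real.exp (s * x) ∂μ = ∫ x, Real.exp (s * x) ∂ν) : μ = ν := by
  have fin : ∀ μ : Measure ℝ, (∀ s : ℝ, s < 1 → Integrable (fun x => Real.exp (s * x)) μ) →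
      IsFiniteMeasure μ := by
    intro μ hμ
    have := hμ 0 (by norm_num)
    simp only [zero_mul, Real.exp_zero] at this
    exact (integrable_const_iff_isFiniteMeasure one_ne_zero).1 this
  have := fin μ hμ
  have := fin ν hν
  have sub : ∀ μ : Measure ℝ, (∀ s : ℝ, s < 1 → Integrable (fun x => Real.exp (s * x)) μ) →
      Set.Iio (1 : ℝ) ⊆ interior (integrableExpSet id μ) := by
    intro μ hμ
    exact interior_maximal (fun s hs => hμ s hs) isOpen_Iio
  have an : ∀ μ : Measure ℝ, (∀ s : ℝ, s < 1 → Integrable (fun x => Real.exp (s * x)) μ) →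
      AnalyticOnNhd ℂ (complexMGF id μ) {z | z.re < 1} := by
    intro μ hμ z hz
    exact analyticAt_complexMGF (sub μ hμ hz)
  have conv : Convex ℝ {z : ℂ | z.re < 1} := convex_halfSpace_re_lt 1
  have eq : Set.EqOn (complexMGF id μ) (complexMGF id ν) {z | z.re < 1} := by
    refine AnalyticOnNhd.eqOn_of_preconnected_of_frequently_eq (an μ hμ) (an ν hν)
      conv.isPreconnected (z₀ := ((0 : ℝ) : ℂ)) (by simp) ?_
    have h_real : ∃ᶠ (x : ℝ) in nhdsWithin 0 {0}ᶜ, complexMGF id μ x = complexMGF id ν x := by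
      apply Filter.Eventually.frequently
      have : ∀ᶠ x : ℝ in nhds 0, x < 1 := eventually_lt_nhds (by norm_num)
      filter_upwards [mem_nhdsWithin_of_mem_nhds this] with x hx
      rw [complexMGF_ofReal, complexMGF_ofReal]
      simp only [mgf, id]
      rw [h x hx]
    rw [Filter.frequently_iff_seq_forall] at h_real ⊢
    obtain ⟨xs, hx_tendsto, hx_eq⟩ := h_real
    refine ⟨fun n ↦ xs n, ?_, fun n ↦ ?_⟩
    · rw [tendsto_nhdsWithin_iff] at hx_tendsto ⊢
      constructor
      · exact (Complex.continuous_ofReal.tendsto 0).comp hx_tendsto.1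
      · simpa using hx_tendsto.2
    · simp [hx_eq]
  apply Measure.ext_of_charFun
  ext t
  rw [← complexMGF_id_mul_I, ← complexMGF_id_mul_I]
  exact eq (by simp)

/-- uniqueness of Laplace transforms of nonnegative functions -/
lemma laplace_uniq (P Q : ℝ → ENNReal) (hP : Measurable P) (hQ : Measurable Q)
    (h : ∀ l : ℝ, 0 < l → ∫⁻ t, P t * ENNReal.ofReal (Real.exp (-l * t)) ≠ ⊤)
    (h2 : ∀ l : ℝ, 0 < l → ∫⁻ t, P t * ENNReal.ofReal (Real.exp (-l * t))
      = ∫⁻ t, Q t * ENNReal.ofReal (Real.exp (-l * t))) : P =ᵐ[volume] Q := by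
  set E : ℝ → ENNReal := fun t => ENNReal.ofReal (Real.exp (-1 * t)) with hE
  have mE : Measurable E := by fun_prop
  have lint : ∀ R : ℝ → ENNReal, Measurable R → ∀ s : ℝ,
      ∫⁻ x, ENNReal.ofReal (Real.exp (s * x)) ∂(volume.withDensity (R * E))
      = ∫⁻ t, R t * ENNReal.ofReal (Real.exp (-(1 - s) * t)) := by
    intro R hR s
    rw [lintegral_withDensity_eq_lintegral_mul _ (hR.mul mE) (by fun_prop)]
    refine lintegral_congr fun x => ?_
    simp only [Pi.mul_apply, hE]
    rw [mul_assoc, ← ENNReal.ofReal_mul (Real.exp_pos _).le, ← Real.exp_add]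
    ring_nf
  have integ : ∀ R : ℝ → ENNReal, Measurable R →
      (∀ l : ℝ, 0 < l → ∫⁻ t, R t * ENNReal.ofReal (Real.exp (-l * t)) ≠ ⊤) →
      ∀ s : ℝ, s < 1 → Integrable (fun x => Real.exp (s * x)) (volume.withDensity (R * E)) := by
    intro R hR hR2 s hs
    refine ⟨by fun_prop, ?_⟩
    rw [hasFiniteIntegral_iff_ofReal (Filter.Eventually.of_forall fun x => (Real.exp_pos _).le),
      lint R hR]
    exact lt_top_iff_ne_top.2 (hR2 (1 - s) (by linarith))
  have hfin2 : ∀ l : ℝ, 0 < l → ∫⁻ t, Q t * ENNReal.ofReal (Real.exp (-l * t)) ≠ ⊤ :=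
    fun l hl => h2 l hl ▸ h l hl
  have key := uniq_aux (volume.withDensity (P * E)) (volume.withDensity (Q * E))
    (integ P hP h) (integ Q hQ hfin2) (by
      intro s hs
      rw [integral_eq_lintegral_of_nonneg_ae
          (Filter.Eventually.of_forall fun x => (Real.exp_pos _).le) (by fun_prop),
        integral_eq_lintegral_of_nonneg_ae
          (Filter.Eventually.of_forall fun x => (Real.exp_pos _).le) (by fun_prop),
        lint P hP, lint Q hQ, h2 _ (by linarith)])
  rw [withDensity_eq_iff_of_sigmaFinite (hP.mul mE).aemeasurable (hQ.mul mE).aemeasurable] at key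
  filter_upwards [key] with x hx
  simp only [Pi.mul_apply, hE] at hx
  exact (ENNReal.mul_left_inj (by simp [Real.exp_pos]) ENNReal.ofReal_ne_top).1 hx

lemma exists_phi (β : ℝ) (hβ0 : 0 < β) (f : ℝ → ℝ) (hf : IsStableDensity β f) :
    ∃ φ : ℝ → ENNReal, Measurable φ ∧ (∀ t ≤ 0, φ t = 0) ∧ (∀ t, φ t ≠ ⊤) ∧
      φ =ᵐ[volume] fun t => ENNReal.ofReal (f t) := by
  obtain ⟨h0, h1, h2⟩ := hf
  have hi : Integrable f (volume.restrict (Set.Ioi 0)) := by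
    have := h2 0 le_rfl
    simp only [neg_zero, zero_mul, Real.exp_zero, one_mul, Real.zero_rpow hβ0.ne'] at this
    by_contra hc
    rw [integral_undef hc] at this
    norm_num at this
  have hind : (Set.Ioi (0 : ℝ)).indicator f = f := by
    ext t
    by_cases ht : t ∈ Set.Ioi (0 : ℝ)
    · simp [Set.indicator_of_mem ht]
    · rw [Set.indicator_of_notMem ht, h1 t (by simpa using ht)]
  have hm : AEMeasurable f volume := by
    rw [← hind]
    exact (aemeasurable_indicator_iff measurableSet_Ioi).2 hi.aemeasurable
  refine ⟨(Set.Ioi (0 : ℝ)).indicator fun t => ENNReal.ofReal (hm.mk f t),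
    (hm.measurable_mk.ennreal_ofReal).indicator measurableSet_Ioi, ?_, ?_, ?_⟩
  · intro t ht
    exact Set.indicator_of_notMem (by simpa using ht) _
  · intro t
    by_cases ht : t ∈ Set.Ioi (0 : ℝ)
    · rw [Set.indicator_of_mem ht]; exact ENNReal.ofReal_ne_top
    · rw [Set.indicator_of_notMem ht]; simp
  · filter_upwards [hm.ae_eq_mk] with t ht
    by_cases htt : t ∈ Set.Ioi (0 : ℝ)
    · rw [Set.indicator_of_mem htt, ht]
    · rw [Set.indicator_of_notMem htt, h1 t (by simpa using htt)]; simp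

lemma phi_base (β : ℝ) (f : ℝ → ℝ) (hf : IsStableDensity β f)
    (φ : ℝ → ENNReal) (hm : Measurable φ) (hfin : ∀ t, φ t ≠ ⊤)
    (hae : φ =ᵐ[volume] fun t => ENNReal.ofReal (f t)) (s : ℝ) (hs : s < 0) :
    ∫ x, Real.exp (s * x) ∂(volume.withDensity φ) = Real.exp (-((-s) ^ β)) := by
  obtain ⟨h0, h1, h2⟩ := hf
  rw [integral_withDensity_eq_integral_toReal_smul hm
    (Filter.Eventually.of_forall fun x => lt_top_iff_ne_top.2 (hfin x)), ← h2 (-s) (by linarith),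
    ← integral_indicator measurableSet_Ioi]
  apply integral_congr_ae
  filter_upwards [hae] with t ht
  rw [ht, ENNReal.toReal_ofReal (h0 t)]
  by_cases htt : t ∈ Set.Ioi (0 : ℝ)
  · rw [Set.indicator_of_mem htt]; simp; ring
  · rw [Set.indicator_of_notMem htt, h1 t (by simpa using htt)]; simp

open ProbabilityTheory in
lemma moments (β : ℝ) (ρ : Measure ℝ)
    (hb : ∀ s < 0, ∫ x, Real.exp (s * x) ∂ρ = Real.exp (-((-s) ^ β)))
    (hI : ∀ s < 0, s ∈ interior (integrableExpSet id ρ)) (n : ℕ) :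
    ∀ s < 0, ∫ x, x ^ n * Real.exp (s * x) ∂ρ = Real.exp (-((-s) ^ β)) *
      ∑ k ∈ Finset.range (n + 1), gA β n k * (-s) ^ (k * β - n : ℝ) := by
  induction n with
  | zero =>
    intro s hs
    simp [hb s hs, gA_zero_zero]
  | succ n ih =>
    intro s hs
    have d1 := hasDerivAt_integral_pow_mul_exp_real (hI s hs) n
    simp only [id] at d1
    have hs' : -s ≠ 0 := by linarith
    have dp : ∀ p : ℝ, HasDerivAt (fun s : ℝ => (-s) ^ p) (-(p * (-s) ^ (p - 1))) s := by
      intro p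
      have := (hasDerivAt_neg s).rpow_const (p := p) (Or.inl hs')
      convert this using 1
      ring
    have d2 : HasDerivAt (fun s : ℝ => Real.exp (-((-s) ^ β)) *
      ∑ k ∈ Finset.range (n + 1), gA β n k * (-s) ^ (k * β - n : ℝ))
      (Real.exp (-((-s) ^ β)) * (- -(β * (-s) ^ (β - 1))) *
        ∑ k ∈ Finset.range (n + 1), gA β n k * (-s) ^ (k * β - n : ℝ) +
       Real.exp (-((-s) ^ β)) *
        ∑ k ∈ Finset.range (n + 1), gA β n k *
          (-((k * β - n : ℝ) * (-s) ^ ((k * β - n : ℝ) - 1)))) s := by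
      refine ((dp β).neg.exp).mul ?_
      exact HasDerivAt.fun_sum fun k _ => (dp _).const_mul _
    have ev : (fun s : ℝ => Real.exp (-((-s) ^ β)) *
      ∑ k ∈ Finset.range (n + 1), gA β n k * (-s) ^ (k * β - n : ℝ)) =ᶠ[nhds s]
      fun s => ∫ x, x ^ n * Real.exp (s * x) ∂ρ := by
      filter_upwards [eventually_lt_nhds hs] with y hy
      exact (ih y hy).symm
    rw [(d1.congr_of_eventuallyEq ev).unique d2]
    rw [← gA_sum_step β n (fun k => (-s) ^ (k * β - (n + 1 : ℕ) : ℝ)), mul_assoc, ← mul_add,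
      Finset.mul_sum, ← Finset.sum_add_distrib]
    congr 1
    refine Finset.sum_congr rfl fun k _ => ?_
    have e1 : (-s) ^ (((k + 1 : ℕ) : ℝ) * β - (n + 1 : ℕ) : ℝ)
        = (-s) ^ (β - 1) * (-s) ^ (k * β - n : ℝ) := by
      rw [← Real.rpow_add (by linarith)]; congr 1; push_cast; ring
    have e2 : (k * β - (n + 1 : ℕ) : ℝ) = k * β - n - 1 := by push_cast; ring
    simp only [e1, e2]
    ring

open ProbabilityTheory in
lemma laplace_pow (β : ℝ) (f : ℝ → ℝ) (hf : IsStableDensity β f)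
    (φ : ℝ → ENNReal) (hm : Measurable φ) (hz : ∀ t ≤ 0, φ t = 0) (hfin : ∀ t, φ t ≠ ⊤)
    (hae : φ =ᵐ[volume] fun t => ENNReal.ofReal (f t)) (n : ℕ) (l : ℝ) (hl : 0 < l) :
    ∫⁻ t, φ t * ENNReal.ofReal (t ^ n) * ENNReal.ofReal (Real.exp (-l * t))
      = ENNReal.ofReal (Real.exp (-(l ^ β)) *
      ∑ k ∈ Finset.range (n + 1), gA β n k * l ^ (k * β - n : ℝ)) := by
  have hb := phi_base β f hf φ hm hfin hae
  have hi : ∀ s < 0, Integrable (fun x => Real.exp (s * x)) (volume.withDensity φ) := by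
    intro s hs
    by_contra hc
    have := hb s hs
    rw [integral_undef hc] at this
    exact (Real.exp_pos _).ne this
  have hI : ∀ s < 0, s ∈ interior (integrableExpSet id (volume.withDensity φ)) := by
    intro s hs
    exact interior_maximal (fun s hs => hi s hs) isOpen_Iio hs
  have key := moments β _ hb hI n (-l) (by linarith)
  rw [neg_neg] at key
  have hpi : Integrable (fun x : ℝ => x ^ n * Real.exp (-l * x)) (volume.withDensity φ) := by
    have := integrable_pow_mul_exp_of_mem_interior_integrableExpSet (hI (-l) (by linarith)) n
    simpa using this
  have hnn : 0 ≤ᵐ[volume.withDensity φ] fun x : ℝ => x ^ n * Real.exp (-l * x) := by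
    rw [Filter.EventuallyLE, ae_withDensity_iff hm]
    filter_upwards with x hx
    have : 0 < x := by
      by_contra hc
      exact hx (hz x (not_lt.1 hc))
    show (0 : ℝ) ≤ _
    positivity
  rw [← key, ofReal_integral_eq_lintegral_ofReal hpi hnn,
    lintegral_withDensity_eq_lintegral_mul _ hm (by fun_prop)]
  refine lintegral_congr fun x => ?_
  simp only [Pi.mul_apply]
  rw [mul_assoc]
  by_cases hx : 0 < x
  · rw [ENNReal.ofReal_mul (by positivity)]
  · rw [hz x (not_lt.1 hx)]; simp

noncomputable def gG (a : ℝ) : ℝ → ENNReal :=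
  (Set.Ioi (0 : ℝ)).indicator fun u => ENNReal.ofReal (u ^ (a - 1) / Real.Gamma a)

lemma gG_meas (a : ℝ) : Measurable (gG a) := by
  unfold gG
  exact Measurable.indicator (by fun_prop) measurableSet_Ioi

lemma laplace_gG (a : ℝ) (ha : 0 < a) (l : ℝ) (hl : 0 < l) :
    ∫⁻ t, gG a t * ENNReal.ofReal (Real.exp (-l * t)) = ENNReal.ofReal (l ^ (-a)) := by
  have hG := Real.Gamma_pos_of_pos ha
  have h := Real.integral_rpow_mul_exp_neg_mul_Ioi ha hl
  have hpos : 0 < (1 / l) ^ a * Real.Gamma a := by positivity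
  have hi : IntegrableOn (fun t : ℝ => t ^ (a - 1) * Real.exp (-(l * t))) (Set.Ioi 0) := by
    by_contra hc
    rw [integral_undef hc] at h
    exact hpos.ne h
  have e : l ^ (-a) = ∫ t in Set.Ioi (0 : ℝ), (t ^ (a - 1) * Real.exp (-(l * t))) / Real.Gamma a := by
    rw [integral_div, h, one_div, Real.inv_rpow hl.le, ← Real.rpow_neg hl.le]
    field_simp
  rw [e, ofReal_integral_eq_lintegral_ofReal (hi.div_const _), ← lintegral_indicator measurableSet_Ioi]
  · refine lintegral_congr fun t => ?_
    unfold gG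
    by_cases ht : t ∈ Set.Ioi (0 : ℝ)
    · rw [Set.indicator_of_mem ht, Set.indicator_of_mem ht]
      have : (0 : ℝ) < t := ht
      rw [← ENNReal.ofReal_mul (by positivity)]
      congr 1
      rw [neg_mul]; ring
    · rw [Set.indicator_of_notMem ht, Set.indicator_of_notMem ht]; simp
  · filter_upwards [ae_restrict_mem measurableSet_Ioi] with t ht
    have : (0 : ℝ) < t := ht
    show (0 : ℝ) ≤ _
    positivity

lemma laplace_conv (φ G : ℝ → ENNReal) (hφ : Measurable φ) (hG : Measurable G) (l : ℝ) :
    ∫⁻ t, (∫⁻ v, φ v * G (t - v)) * ENNReal.ofReal (Real.exp (-l * t))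
      = (∫⁻ t, φ t * ENNReal.ofReal (Real.exp (-l * t))) *
        ∫⁻ t, G t * ENNReal.ofReal (Real.exp (-l * t)) := by
  have e : ∀ t v : ℝ, φ v * G (t - v) * ENNReal.ofReal (Real.exp (-l * t))
      = (φ v * ENNReal.ofReal (Real.exp (-l * v))) *
        (G (t - v) * ENNReal.ofReal (Real.exp (-l * (t - v)))) := by
    intro t v
    have : Real.exp (-l * t) = Real.exp (-l * v) * Real.exp (-l * (t - v)) := by
      rw [← Real.exp_add]; ring_nf
    rw [this, ENNReal.ofReal_mul (Real.exp_pos _).le]; ring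
  calc _ = ∫⁻ t, ∫⁻ v, (φ v * ENNReal.ofReal (Real.exp (-l * v))) *
        (G (t - v) * ENNReal.ofReal (Real.exp (-l * (t - v)))) := by
        refine lintegral_congr fun t => ?_
        rw [← lintegral_mul_const _ (by fun_prop)]
        exact lintegral_congr fun v => e t v
    _ = ∫⁻ v, ∫⁻ t, (φ v * ENNReal.ofReal (Real.exp (-l * v))) *
        (G (t - v) * ENNReal.ofReal (Real.exp (-l * (t - v)))) := by
        refine lintegral_lintegral_swap (Measurable.aemeasurable ?_)
        unfold Function.uncurry
        fun_prop
    _ = ∫⁻ v, (φ v * ENNReal.ofReal (Real.exp (-l * v))) *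
        ∫⁻ t, G t * ENNReal.ofReal (Real.exp (-l * t)) := by
        refine lintegral_congr fun v => ?_
        rw [lintegral_const_mul _ (by fun_prop),
          lintegral_sub_right_eq_self (fun t => G t * ENNReal.ofReal (Real.exp (-l * t))) v]
    _ = _ := lintegral_mul_const _ (by fun_prop)

lemma conv_toReal (β : ℝ) (f : ℝ → ℝ) (hf : IsStableDensity β f)
    (φ : ℝ → ENNReal) (hm : Measurable φ) (hz : ∀ t ≤ 0, φ t = 0) (hfin : ∀ t, φ t ≠ ⊤)
    (hae : φ =ᵐ[volume] fun t => ENNReal.ofReal (f t)) (a : ℝ) (ha : 0 < a) (t : ℝ) :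
    ∫ v in Set.Ioo (0 : ℝ) t, f v * (t - v) ^ (a - 1) / Real.Gamma a
      = (∫⁻ v, φ v * gG a (t - v)).toReal := by
  obtain ⟨h0, h1, h2⟩ := hf
  have hG := Real.Gamma_pos_of_pos ha
  have mG := gG_meas a
  rw [← integral_toReal (by fun_prop) (Filter.Eventually.of_forall fun v =>
    ENNReal.mul_lt_top (lt_top_iff_ne_top.2 (hfin v)) ?_), ← integral_indicator measurableSet_Ioo]
  · apply integral_congr_ae
    filter_upwards [hae] with v hv
    by_cases hv1 : v ∈ Set.Ioo 0 t
    · rw [Set.indicator_of_mem hv1, hv, gG, Set.indicator_of_mem (by simpa using hv1.2),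
        ENNReal.toReal_mul, ENNReal.toReal_ofReal (h0 v), ENNReal.toReal_ofReal]
      · ring
      · have : 0 < t - v := by linarith [hv1.2]
        positivity
    · rw [Set.indicator_of_notMem hv1]
      by_cases hv2 : 0 < v
      · have : ¬ v < t := fun h => hv1 ⟨hv2, h⟩
        rw [gG, Set.indicator_of_notMem (by simpa using this)]; simp
      · rw [hz v (not_lt.1 hv2)]; simp
  · unfold gG
    by_cases h : t - v ∈ Set.Ioi (0 : ℝ)
    · rw [Set.indicator_of_mem h]; exact ENNReal.ofReal_lt_top
    · rw [Set.indicator_of_notMem h]; simp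

theorem gibbs_decomposition_stable_density (β : ℝ) (hβ0 : 0 < β) (hβ1 : β < 1)
    (n : ℕ) (hn : 1 ≤ n) (f : ℝ → ℝ) (hf : IsStableDensity β f) :
    ∀ᵐ t ∂(volume.restrict (Set.Ioi (0 : ℝ))),
      ∑ k ∈ Finset.Icc 1 n,
          β ^ k * t ^ (-(n : ℝ)) * genStirling β n k *
            ∫ v in Set.Ioo (0 : ℝ) t,
              f v * (t - v) ^ ((n : ℝ) - k * β - 1) / Real.Gamma ((n : ℝ) - k * β)
        = f t := by
  obtain ⟨φ, hm, hz, hfin, hae⟩ := exists_phi β hβ0 f hf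
  have hA := gA_nonneg β hβ0 hβ1 n
  have hA0 : gA β n 0 = 0 := by
    obtain ⟨m, rfl⟩ : ∃ m, n = m + 1 := ⟨n - 1, by omega⟩
    simpa [gA] using rf_zero_succ m
  have hr : Finset.range (n + 1) = insert 0 (Finset.Icc 1 n) := by
    ext x; simp; omega
  have ha : ∀ k ∈ Finset.Icc 1 n, 0 < (n : ℝ) - k * β := by
    intro k hk
    have h1 : (k : ℝ) ≤ n := by exact_mod_cast (Finset.mem_Icc.1 hk).2
    have h2 : (1 : ℝ) ≤ k := by exact_mod_cast (Finset.mem_Icc.1 hk).1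
    nlinarith
  set C : ℕ → ℝ → ENNReal := fun k t => ∫⁻ v, φ v * gG ((n : ℝ) - k * β) (t - v) with hC
  have mC : ∀ k, Measurable (C k) := by
    intro k
    have mG := gG_meas ((n : ℝ) - k * β)
    refine Measurable.lintegral_prod_right' (f := fun p : ℝ × ℝ => φ p.2 *
      gG ((n : ℝ) - k * β) (p.1 - p.2)) ?_
    fun_prop
  have L := fun m l hl => laplace_pow β f hf φ hm hz hfin hae m l hl
  have key := laplace_uniq (fun t => φ t * ENNReal.ofReal (t ^ n))
    (fun t => ∑ k ∈ Finset.Icc 1 n, ENNReal.ofReal (gA β n k) * C k t)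
    (by fun_prop) (by fun_prop)
    (fun l hl => by rw [L n l hl]; exact ENNReal.ofReal_ne_top) (by
      intro l hl
      rw [L n l hl]
      simp only [Finset.sum_mul]
      rw [lintegral_finsetSum _ (fun k _ => by fun_prop), hr, Finset.sum_insert (by simp), hA0,
        zero_mul, zero_add, Finset.mul_sum, ENNReal.ofReal_sum_of_nonneg]
      · refine Finset.sum_congr rfl fun k hk => ?_
        simp only [mul_assoc]
        rw [lintegral_const_mul _ (by fun_prop), laplace_conv _ _ hm (gG_meas _),
          laplace_gG _ (ha k hk) l hl]
        have L0 := L 0 l hl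
        simp [gA_zero_zero] at L0
        simp only [neg_mul]
        rw [L0, ← ENNReal.ofReal_mul (Real.exp_pos _).le, ← ENNReal.ofReal_mul (hA k), neg_sub]
        congr 1
        ring
      · intro k _
        have := hA k
        positivity)
  filter_upwards [ae_restrict_of_ae key, ae_restrict_of_ae hae,
    ae_restrict_mem measurableSet_Ioi] with t h1 h2 ht
  have ht : 0 < t := ht
  have hne : ∑ k ∈ Finset.Icc 1 n, ENNReal.ofReal (gA β n k) * C k t ≠ ⊤ := by
    rw [← h1]; exact ENNReal.mul_ne_top (hfin t) ENNReal.ofReal_ne_top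
  have h3 := congrArg ENNReal.toReal h1
  rw [ENNReal.toReal_sum (ENNReal.sum_ne_top.1 hne), ENNReal.toReal_mul, h2,
    ENNReal.toReal_ofReal (hf.1 t), ENNReal.toReal_ofReal (by positivity)] at h3
  have h4 : f t = t ^ (-(n : ℝ)) * (f t * t ^ n) := by
    rw [Real.rpow_neg ht.le, Real.rpow_natCast]
    field_simp
  rw [h4, h3, Finset.mul_sum]
  refine Finset.sum_congr rfl fun k hk => ?_
  rw [conv_toReal β f hf φ hm hz hfin hae _ (ha k hk) t, ENNReal.toReal_mul,
    ENNReal.toReal_ofReal (hA k), gA_eq β hβ0.ne' n k hn]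
  ring
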